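/- Perturbation bound for symplectic eigenvalues: let γ, γ' ∈ ℝ^{2n×2n} be positive definite with non-increasingly ordered symplectic eigenvalues d_j^↓(γ), d_j^↓(γ'). Then max_j |d_j^↓(γ) − d_j^↓(γ')| ≤ (‖γ‖^{1/2} + ‖γ'‖^{1/2}) · ‖γ − γ'‖^{1/2}. -/

import Mathlib

open scoped BigOperators Matrix

/-- `d : Fin n → ℝ` is a (Williamson) symplectic spectrum of a matrix
`M : Matrix (Fin n ⊕ Fin n) (Fin n ⊕ Fin n) ℝ` if there is a symplectic matrix
`S` with `S M Sᵀ = diag(d₁,…,dₙ,d₁,…,dₙ)`. -/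
def IsSymplecticSpectrum {n : ℕ}
    (M : Matrix (Fin n ⊕ Fin n) (Fin n ⊕ Fin n) ℝ) (d : Fin n → ℝ) : Prop :=
  ∃ S ∈ Matrix.symplecticGroup (Fin n) ℝ,
    S * M * Sᵀ = Matrix.diagonal (Sum.elim d d)

/-!
Write `A = √γ`, `B = √γ'`. If `S γ Sᵀ = diag(d, d)` with `S` symplectic, then `T = A Sᵀ` has
orthogonal columns, `Tᵀ T = diag(d, d)`, and `A J A = T J Tᵀ` because `Sᵀ J S = J`. So the
symplectic eigenvalues of `γ`, each counted twice, are the singular values of `A J A`. Weyl's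
inequality bounds their perturbation by `‖A J A - B J B‖ ≤ (‖A‖ + ‖B‖) ‖A - B‖`, and
`‖A - B‖ ≤ ‖A² - B²‖ ^ (1 / 2)` for positive semidefinite `A` and `B`.
-/

-- Pair `A² - B² = A (A - B) + (A - B) B` with the eigenvector `v` and use
-- `|⟪(A - B) v, v⟫| ≤ ⟪(A + B) v, v⟫`.
lemma sq_eigenvalue_sub_le_norm_mul_self_sub_mul_self {𝕜 E : Type*} [RCLike 𝕜]
    [NormedAddCommGroup E] [InnerProductSpace 𝕜 E] {A B : E →L[𝕜] E} (hA : A.IsPositive)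
    (hB : B.IsPositive) {c : ℝ} {v : E} (hv0 : v ≠ 0) (hv : (A - B) v = (c : 𝕜) • v) :
    c ^ 2 ≤ ‖A * A - B * B‖ := by
  set p := A.reApplyInnerSelf v with hp
  set q := B.reApplyInnerSelf v with hq
  have hp0 : 0 ≤ p := hA.2 v
  have hq0 : 0 ≤ q := hB.2 v
  have hsub : p - q = c * ‖v‖ ^ 2 := by
    rw [hp, hq, ContinuousLinearMap.reApplyInnerSelf_apply,
      ContinuousLinearMap.reApplyInnerSelf_apply, ← map_sub, ← inner_sub_left,
      ← sub_apply, hv, inner_smul_left, RCLike.conj_ofReal, RCLike.re_ofReal_mul,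
      inner_self_eq_norm_sq]
  have hadd : RCLike.re (inner 𝕜 ((A * A - B * B) v) v) = c * (p + q) := by
    have hsplit : A * A - B * B = A * (A - B) + (A - B) * B := by noncomm_ring
    have hsymm : inner 𝕜 ((A - B) (B v)) v = inner 𝕜 (B v) ((A - B) v) :=
      (hA.isSymmetric.sub hB.isSymmetric) (B v) v
    rw [hsplit, add_apply, mul_apply_eq_comp, mul_apply_eq_comp, inner_add_left, hsymm, hv,
      map_smul, inner_smul_left, inner_smul_right]
    simp [hp, hq, ContinuousLinearMap.reApplyInnerSelf_apply, mul_add]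
  refine le_of_mul_le_mul_right ?_ (pow_pos (norm_pos_iff.2 hv0) 2)
  calc c ^ 2 * ‖v‖ ^ 2 = |c| * |p - q| := by
        rw [hsub, abs_mul, abs_sq, ← mul_assoc, ← sq, sq_abs]
    _ ≤ |c| * (p + q) := by
        gcongr
        exact abs_sub_le_of_nonneg_of_le hp0 (by linarith) hq0 (by linarith)
    _ = |RCLike.re (inner 𝕜 ((A * A - B * B) v) v)| := by
        rw [hadd, abs_mul, abs_of_nonneg (add_nonneg hp0 hq0)]
    _ ≤ ‖(A * A - B * B) v‖ * ‖v‖ := (RCLike.abs_re_le_norm _).trans (norm_inner_le_norm _ _)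
    _ ≤ ‖A * A - B * B‖ * ‖v‖ ^ 2 := by
        rw [sq, ← mul_assoc]
        gcongr
        exact ContinuousLinearMap.le_opNorm _ v

open Matrix
open scoped ComplexOrder Matrix.Norms.L2Operator MatrixOrder

section PositiveSqrt

variable {𝕜 m : Type*} [RCLike 𝕜] [Fintype m] [DecidableEq m]

lemma isPositive_toEuclideanCLM {A : Matrix m m 𝕜} (hA : A.PosSemidef) :
    (toEuclideanCLM (𝕜 := 𝕜) A).IsPositive := by
  rwa [← ContinuousLinearMap.isPositive_toLinearMap_iff, coe_toEuclideanCLM_eq_toEuclideanLin,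
    isPositive_toEuclideanLin_iff]

lemma l2_opNorm_eq_norm_eigenvalues {H : Matrix m m 𝕜} (hH : H.IsHermitian) :
    ‖H‖ = ‖hH.eigenvalues‖ := by
  conv_lhs => rw [hH.spectral_theorem, Unitary.conjStarAlgAut_apply, ← Unitary.coe_star,
    CStarRing.norm_mul_coe_unitary, CStarRing.norm_coe_unitary_mul, l2_opNorm_diagonal]
  simp [Pi.norm_def, nnnorm_algebraMap']

lemma norm_sub_le_sqrt_norm_mul_self_sub_mul_self {A B : Matrix m m 𝕜} (hA : A.PosSemidef)
    (hB : B.PosSemidef) : ‖A - B‖ ≤ √‖A * A - B * B‖ := by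
  have hH : (A - B).IsHermitian := hA.1.sub hB.1
  rw [l2_opNorm_eq_norm_eigenvalues hH, pi_norm_le_iff_of_nonneg (Real.sqrt_nonneg _)]
  intro i
  have hv : (toEuclideanCLM (𝕜 := 𝕜) A - toEuclideanCLM (𝕜 := 𝕜) B) (hH.eigenvectorBasis i) =
      (hH.eigenvalues i : 𝕜) • hH.eigenvectorBasis i := by
    rw [← map_sub]
    ext1
    rw [ofLp_toEuclideanCLM, hH.mulVec_eigenvectorBasis, WithLp.ofLp_smul,
      RCLike.real_smul_eq_coe_smul (K := 𝕜)]
  have hsq := sq_eigenvalue_sub_le_norm_mul_self_sub_mul_self (isPositive_toEuclideanCLM hA)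
    (isPositive_toEuclideanCLM hB) (hH.eigenvectorBasis.orthonormal.ne_zero i) hv
  rw [← map_mul, ← map_mul, ← map_sub, l2_opNorm_toEuclideanCLM] at hsq
  exact Real.abs_le_sqrt hsq

lemma norm_sqrt_sub_sqrt_le {A B : Matrix m m 𝕜} (hA : A.PosSemidef) (hB : B.PosSemidef) :
    ‖CFC.sqrt A - CFC.sqrt B‖ ≤ √‖A - B‖ := by
  simpa only [CFC.sqrt_mul_sqrt_self _ hA.nonneg, CFC.sqrt_mul_sqrt_self _ hB.nonneg] using
    norm_sub_le_sqrt_norm_mul_self_sub_mul_self (CFC.sqrt_nonneg A).posSemidef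
      (CFC.sqrt_nonneg B).posSemidef

end PositiveSqrt

lemma norm_mul_unitary_mul_sub_le {R : Type*} [NormedRing R] [StarRing R] [CStarRing R] {u : R}
    (hu : u ∈ unitary R) (a b : R) : ‖a * u * a - b * u * b‖ ≤ (‖a‖ + ‖b‖) * ‖a - b‖ :=
  calc ‖a * u * a - b * u * b‖ = ‖a * u * (a - b) + (a - b) * u * b‖ := by
        congr 1; noncomm_ring
    _ ≤ ‖a * u‖ * ‖a - b‖ + ‖(a - b) * u‖ * ‖b‖ :=
        (norm_add_le _ _).trans (add_le_add (norm_mul_le _ _) (norm_mul_le _ _))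
    _ = (‖a‖ + ‖b‖) * ‖a - b‖ := by
        rw [CStarRing.norm_mul_mem_unitary _ hu, CStarRing.norm_mul_mem_unitary _ hu]; ring

section SingularValues

variable {𝕜 m : Type*} [RCLike 𝕜] [Fintype m] [DecidableEq m]

/-- `f` lists the singular values of the square matrix `K`, with multiplicity and in any order:
`K = U diag(f) V` is a singular value decomposition. -/
def HasSingularValues (K : Matrix m m 𝕜) (f : m → ℝ) : Prop :=
  (∀ i, 0 ≤ f i) ∧ ∃ U ∈ unitaryGroup m 𝕜, ∃ V ∈ unitaryGroup m 𝕜,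
    K = U * diagonal (fun i => (f i : 𝕜)) * V

lemma norm_toLp_unitary_mulVec {U : Matrix m m 𝕜} (hU : U ∈ unitaryGroup m 𝕜) (x : m → 𝕜) :
    ‖WithLp.toLp 2 (U *ᵥ x)‖ = ‖WithLp.toLp 2 x‖ := by
  rw [← toEuclideanCLM_toLp]
  exact ContinuousLinearMap.norm_map_of_mem_unitary (Unitary.map_mem toEuclideanCLM hU) _

lemma norm_diagonal_mulVec_le_norm_diagonal_mulVec {f g x : m → 𝕜}
    (h : ∀ i, x i ≠ 0 → ‖f i‖ ≤ ‖g i‖) :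
    ‖WithLp.toLp 2 (diagonal f *ᵥ x)‖ ≤ ‖WithLp.toLp 2 (diagonal g *ᵥ x)‖ := by
  rw [EuclideanSpace.norm_eq, EuclideanSpace.norm_eq]
  refine Real.sqrt_le_sqrt (Finset.sum_le_sum fun i _ => ?_)
  simp only [mulVec_diagonal, norm_mul]
  by_cases hi : x i = 0
  · simp [hi]
  · gcongr
    exact h i hi

lemma norm_diagonal_const_mulVec {a : ℝ} (ha : 0 ≤ a) (x : m → 𝕜) :
    ‖WithLp.toLp 2 (diagonal (fun _ => (a : 𝕜)) *ᵥ x)‖ = a * ‖WithLp.toLp 2 x‖ := by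
  rw [diagonal_const_mulVec, WithLp.toLp_smul, norm_smul, RCLike.norm_of_nonneg ha]

lemma exists_ne_zero_forall_mulVec_eq_zero {F ι κ n : Type*} [Field F] [Fintype n]
    (V : Matrix ι n F) (W : Matrix κ n F) {s : Finset ι} {t : Finset κ}
    (h : s.card + t.card < Fintype.card n) :
    ∃ x ≠ 0, (∀ i ∈ s, (V *ᵥ x) i = 0) ∧ ∀ i ∈ t, (W *ᵥ x) i = 0 := by
  let N : Matrix (s ⊕ t) n F :=
    fromRows (V.submatrix Subtype.val id) (W.submatrix Subtype.val id)
  have hker : LinearMap.ker N.mulVecLin ≠ ⊥ :=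
    LinearMap.ker_ne_bot_of_finrank_lt (by simpa using h)
  obtain ⟨x, hx, hx0⟩ := Submodule.exists_mem_ne_zero_of_ne_bot hker
  refine ⟨x, hx0, fun i hi => ?_, fun i hi => ?_⟩
  · exact congrFun (LinearMap.mem_ker.1 hx) (Sum.inl ⟨i, hi⟩)
  · exact congrFun (LinearMap.mem_ker.1 hx) (Sum.inr ⟨i, hi⟩)

-- By dimension count, `f i * ‖x‖ ≤ ‖K x‖` and `‖L x‖ ≤ g j * ‖x‖` hold for a common `x ≠ 0`.
lemma HasSingularValues.sub_le_norm_sub {K L : Matrix m m 𝕜} {f g : m → ℝ}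
    (hK : HasSingularValues K f) (hL : HasSingularValues L g) {i j : m}
    (h : Finset.card {k | f k < f i} + Finset.card {k | g j < g k} < Fintype.card m) :
    f i - g j ≤ ‖K - L‖ := by
  obtain ⟨hf, U, hU, V, hV, rfl⟩ := hK
  obtain ⟨hg, U', hU', V', hV', rfl⟩ := hL
  set K := U * diagonal (fun k => (f k : 𝕜)) * V with hK
  set L := U' * diagonal (fun k => (g k : 𝕜)) * V' with hL
  obtain ⟨x, hx0, hVx, hV'x⟩ := exists_ne_zero_forall_mulVec_eq_zero V V' h
  have hlower : f i * ‖WithLp.toLp 2 x‖ ≤ ‖WithLp.toLp 2 (K *ᵥ x)‖ := by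
    rw [hK, ← mulVec_mulVec, ← mulVec_mulVec, norm_toLp_unitary_mulVec hU,
      ← norm_toLp_unitary_mulVec hV x, ← norm_diagonal_const_mulVec (hf i)]
    refine norm_diagonal_mulVec_le_norm_diagonal_mulVec fun k hk => ?_
    rw [RCLike.norm_of_nonneg (hf i), RCLike.norm_of_nonneg (hf k)]
    contrapose! hk
    exact hVx k (by simpa using hk)
  have hupper : ‖WithLp.toLp 2 (L *ᵥ x)‖ ≤ g j * ‖WithLp.toLp 2 x‖ := by
    rw [hL, ← mulVec_mulVec, ← mulVec_mulVec, norm_toLp_unitary_mulVec hU',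
      ← norm_toLp_unitary_mulVec hV' x, ← norm_diagonal_const_mulVec (hg j)]
    refine norm_diagonal_mulVec_le_norm_diagonal_mulVec fun k hk => ?_
    rw [RCLike.norm_of_nonneg (hg k), RCLike.norm_of_nonneg (hg j)]
    contrapose! hk
    exact hV'x k (by simpa using hk)
  have hxpos : 0 < ‖WithLp.toLp 2 x‖ := norm_pos_iff.2 (by simpa using hx0)
  refine le_of_mul_le_mul_right ?_ hxpos
  calc (f i - g j) * ‖WithLp.toLp 2 x‖
      ≤ ‖WithLp.toLp 2 (K *ᵥ x)‖ - ‖WithLp.toLp 2 (L *ᵥ x)‖ := by linarith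
    _ ≤ ‖WithLp.toLp 2 ((K - L) *ᵥ x)‖ := by
        rw [sub_mulVec, WithLp.toLp_sub]
        exact norm_sub_norm_le _ _
    _ ≤ ‖K - L‖ * ‖WithLp.toLp 2 x‖ := l2_opNorm_mulVec (K - L) (WithLp.toLp 2 x)

variable {l : Type*} [Fintype l] [LinearOrder l] {K L : Matrix (l ⊕ l) (l ⊕ l) 𝕜} {d e : l → ℝ}

lemma HasSingularValues.sub_le_norm_sub_of_antitone (hK : HasSingularValues K (Sum.elim d d))
    (hL : HasSingularValues L (Sum.elim e e)) (hd : Antitone d) (he : Antitone e) (j : l) :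
    d j - e j ≤ ‖K - L‖ := by
  refine hK.sub_le_norm_sub hL (i := .inl j) (j := .inl j) ?_
  have hdisj : Disjoint (Finset.univ.filter fun k => Sum.elim d d k < Sum.elim d d (.inl j))
      (Finset.univ.filter fun k => Sum.elim e e (.inl j) < Sum.elim e e k) := by
    refine Finset.disjoint_filter.2 ?_
    rintro (k | k) - hkd hke <;> exact lt_asymm (hd.reflect_lt hkd) (he.reflect_lt hke)
  rw [← Finset.card_union_of_disjoint hdisj]
  refine Finset.card_lt_univ_of_notMem (x := .inl j) ?_
  simp only [Finset.mem_union, Finset.mem_filter, lt_irrefl, and_false, or_self, not_false_eq_true]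

lemma HasSingularValues.abs_sub_le_norm_sub (hK : HasSingularValues K (Sum.elim d d))
    (hL : HasSingularValues L (Sum.elim e e)) (hd : Antitone d) (he : Antitone e) (j : l) :
    |d j - e j| ≤ ‖K - L‖ :=
  abs_sub_le_iff.2 ⟨hK.sub_le_norm_sub_of_antitone hL hd he j,
    norm_sub_rev K L ▸ hL.sub_le_norm_sub_of_antitone hK he hd j⟩

end SingularValues

section OrthogonalColumns

variable {𝕜 : Type*} [RCLike 𝕜]

lemma exists_orthonormalBasis_eq_norm_smul {ι E : Type*} [Fintype ι] [NormedAddCommGroup E]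
    [InnerProductSpace 𝕜 E] [FiniteDimensional 𝕜 E] (hcard : Module.finrank 𝕜 E = Fintype.card ι)
    {v : ι → E} (hv : Pairwise fun i j => inner 𝕜 (v i) (v j) = 0) :
    ∃ b : OrthonormalBasis ι 𝕜 E, ∀ i, v i = (‖v i‖ : 𝕜) • b i := by
  have hon : Orthonormal 𝕜 ({i | v i ≠ 0}.domRestrict fun i => (‖v i‖⁻¹ : 𝕜) • v i) := by
    refine ⟨fun i => norm_smul_inv_norm i.2, fun i j hij => ?_⟩
    simp [Set.domRestrict, inner_smul_left, inner_smul_right, hv (Subtype.coe_ne_coe.2 hij)]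
  obtain ⟨b, hb⟩ := hon.exists_orthonormalBasis_extension_of_card_eq hcard
  refine ⟨b, fun i => ?_⟩
  by_cases hi : v i = 0
  · simp [hi]
  · rw [hb i hi, smul_inv_smul₀ (by simpa using hi)]

lemma exists_unitary_mul_diagonal_sqrt {m : Type*} [Fintype m] [DecidableEq m] {T : Matrix m m 𝕜}
    {f : m → ℝ} (hT : Tᴴ * T = diagonal fun i => (f i : 𝕜)) :
    ∃ U ∈ unitaryGroup m 𝕜, T = U * diagonal fun i => (√(f i) : 𝕜) := by
  let v : m → EuclideanSpace 𝕜 m := fun i => WithLp.toLp 2 (T.col i)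
  have hinner (i j : m) : inner 𝕜 (v i) (v j) = (diagonal fun i => (f i : 𝕜)) i j := by
    rw [← hT, EuclideanSpace.inner_eq_star_dotProduct, dotProduct_comm]
    rfl
  obtain ⟨b, hb⟩ := exists_orthonormalBasis_eq_norm_smul (v := v) finrank_euclideanSpace
    fun i j hij => (hinner i j).trans (diagonal_apply_ne _ hij)
  have hnorm (i : m) : ‖v i‖ = √(f i) := by
    rw [@norm_eq_sqrt_re_inner 𝕜, hinner, diagonal_apply_eq, RCLike.ofReal_re]
  refine ⟨(EuclideanSpace.basisFun m 𝕜).toBasis.toMatrix b,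
    (EuclideanSpace.basisFun m 𝕜).toMatrix_orthonormalBasis_mem_unitary b, ?_⟩
  ext i j
  rw [mul_diagonal, ← hnorm, mul_comm]
  exact congrArg (· i) (hb j)

end OrthogonalColumns

section Symplectic

variable {R l : Type*} [CommRing R] [Fintype l] [DecidableEq l]

lemma commute_J_diagonal_elim (f : l → R) : Commute (J l R) (diagonal (Sum.elim f f)) := by
  simp [Commute, SemiconjBy, J, ← fromBlocks_diagonal, fromBlocks_multiply]

lemma J_mem_unitaryGroup [StarRing R] : J l R ∈ unitaryGroup (l ⊕ l) R := by
  simp [mem_unitaryGroup_iff, star_eq_conjTranspose, J, fromBlocks_conjTranspose,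
    fromBlocks_multiply]

lemma hasSingularValues_mul_J_mul_conjTranspose {𝕜 : Type*} [RCLike 𝕜]
    {T : Matrix (l ⊕ l) (l ⊕ l) 𝕜} {d : l → ℝ}
    (hT : Tᴴ * T = diagonal fun i => ((Sum.elim d d i : ℝ) : 𝕜)) :
    HasSingularValues (T * J l 𝕜 * Tᴴ) (Sum.elim d d) := by
  set f : l ⊕ l → ℝ := Sum.elim d d
  have hf0 (i : l ⊕ l) : 0 ≤ f i := by
    have hpos := hT ▸ posSemidef_conjTranspose_mul_self T
    exact RCLike.ofReal_nonneg.1 (posSemidef_diagonal_iff.1 hpos i)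
  obtain ⟨U, hU, hTU⟩ := exists_unitary_mul_diagonal_sqrt hT
  set D : Matrix (l ⊕ l) (l ⊕ l) 𝕜 := diagonal fun i => (√(f i) : 𝕜) with hD
  have hDstar : Dᴴ = D := by
    simp [hD, diagonal_conjTranspose, Pi.star_def]
  have hJD : J l 𝕜 * D = D * J l 𝕜 := by
    have hsum : (fun i => (√(f i) : 𝕜)) =
        Sum.elim (fun i => (√(d i) : 𝕜)) fun i => (√(d i) : 𝕜) := by
      funext i; cases i <;> rfl
    rw [hD, hsum]
    exact commute_J_diagonal_elim _
  have hDD : D * D = diagonal fun i => (f i : 𝕜) := by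
    simp only [hD, diagonal_mul_diagonal, ← RCLike.ofReal_mul, Real.mul_self_sqrt (hf0 _)]
  refine ⟨hf0, U * J l 𝕜, mul_mem hU J_mem_unitaryGroup, Uᴴ, Unitary.star_mem hU, ?_⟩
  calc T * J l 𝕜 * Tᴴ = U * (D * J l 𝕜) * D * Uᴴ := by
        rw [hTU, conjTranspose_mul, hDstar]
        simp only [Matrix.mul_assoc]
    _ = U * J l 𝕜 * (diagonal fun i => (f i : 𝕜)) * Uᴴ := by
        rw [← hJD, ← hDD]
        simp only [Matrix.mul_assoc]

lemma IsSymplecticSpectrum.hasSingularValues {n : ℕ} {M : Matrix (Fin n ⊕ Fin n) (Fin n ⊕ Fin n) ℝ}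
    {d : Fin n → ℝ} (hd : IsSymplecticSpectrum M d) (hM : M.PosSemidef) :
    HasSingularValues (CFC.sqrt M * J (Fin n) ℝ * CFC.sqrt M) (Sum.elim d d) := by
  obtain ⟨S, hS, hSM⟩ := hd
  have hsqrt : CFC.sqrt M * CFC.sqrt M = M := CFC.sqrt_mul_sqrt_self M hM.nonneg
  have hstar : (CFC.sqrt M * Sᵀ)ᴴ = S * CFC.sqrt M := by
    rw [conjTranspose_mul, (CFC.sqrt_nonneg M).posSemidef.1.eq,
      conjTranspose_eq_transpose_of_trivial, transpose_transpose]
  have hcongr : CFC.sqrt M * J (Fin n) ℝ * CFC.sqrt M =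
      CFC.sqrt M * Sᵀ * J (Fin n) ℝ * (CFC.sqrt M * Sᵀ)ᴴ := by
    conv_lhs => rw [← SymplecticGroup.mem_iff'.1 hS]
    rw [hstar]
    simp only [Matrix.mul_assoc]
  rw [hcongr]
  refine hasSingularValues_mul_J_mul_conjTranspose ?_
  calc (CFC.sqrt M * Sᵀ)ᴴ * (CFC.sqrt M * Sᵀ) = S * (CFC.sqrt M * CFC.sqrt M) * Sᵀ := by
        rw [hstar]
        simp only [Matrix.mul_assoc]
    _ = diagonal (Sum.elim d d) := by rw [hsqrt, hSM]

theorem symplectic_eigenvalue_perturbation_general {n : ℕ}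
    (γ γ' : Matrix (Fin n ⊕ Fin n) (Fin n ⊕ Fin n) ℝ)
    (hγ : γ.PosSemidef) (hγ' : γ'.PosSemidef)
    (d e : Fin n → ℝ)
    (hd : IsSymplecticSpectrum γ d) (hdmono : Antitone d)
    (he : IsSymplecticSpectrum γ' e) (hemono : Antitone e) (j : Fin n) :
    |d j - e j| ≤ (√‖γ‖ + √‖γ'‖) * √‖γ - γ'‖ :=
  calc |d j - e j|
      ≤ ‖CFC.sqrt γ * J (Fin n) ℝ * CFC.sqrt γ - CFC.sqrt γ' * J (Fin n) ℝ * CFC.sqrt γ'‖ :=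
        (hd.hasSingularValues hγ).abs_sub_le_norm_sub (he.hasSingularValues hγ') hdmono hemono j
    _ ≤ (‖CFC.sqrt γ‖ + ‖CFC.sqrt γ'‖) * ‖CFC.sqrt γ - CFC.sqrt γ'‖ :=
        norm_mul_unitary_mul_sub_le J_mem_unitaryGroup _ _
    _ ≤ (√‖γ‖ + √‖γ'‖) * √‖γ - γ'‖ := by
        rw [CFC.norm_sqrt γ hγ.nonneg, CFC.norm_sqrt γ' hγ'.nonneg]
        gcongr
        exact norm_sqrt_sub_sqrt_le hγ hγ'

end Symplectic

/-- Perturbation bound for symplectic eigenvalues. Let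
`γ, γ'` be positive definite `2n × 2n` real matrices with non-increasingly
ordered symplectic eigenvalues `d` and `e`. Then
`max_j |d_j − e_j| ≤ (‖γ‖^{1/2} + ‖γ'‖^{1/2})·‖γ − γ'‖^{1/2}` in spectral
norm. -/
theorem symplectic_eigenvalue_perturbation {n : ℕ}
    (γ γ' : Matrix (Fin n ⊕ Fin n) (Fin n ⊕ Fin n) ℝ)
    (hγ : γ.PosDef) (hγ' : γ'.PosDef)
    (d e : Fin n → ℝ)
    (hd : IsSymplecticSpectrum γ d) (hdmono : Antitone d)
    (he : IsSymplecticSpectrum γ' e) (hemono : Antitone e) :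
    ∀ j : Fin n, |d j - e j| ≤
      (Real.sqrt ‖Matrix.toEuclideanCLM (𝕜 := ℝ) γ‖ +
        Real.sqrt ‖Matrix.toEuclideanCLM (𝕜 := ℝ) γ'‖) *
        Real.sqrt ‖Matrix.toEuclideanCLM (𝕜 := ℝ) (γ - γ')‖ :=
  symplectic_eigenvalue_perturbation_general γ γ' hγ.posSemidef hγ'.posSemidef d e
    hd hdmono he hemono
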